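/- arXiv:0804.1039 — 3 statements merged into one kernel-verified Lean document; each statement's English description precedes it below -/
import Mathlib

section
/- Let a ∈ ℝ^{2×2}, b ∈ ℝ², Σ ∈ ℝ^{2×2}, α₁ ∈ ℝ, and let β₁ ∈ ℝ² be a nonzero row vector; set γ₁ = (−β₁₂, β₁₁). Then the condition 'β₁(a x + b) > (1/2) β₁ Σ Σᵀ β₁ᵀ for all x ∈ ℝ² with α₁ + β₁ x = 0' holds if and only if both (i) −(α₁/|β₁|²) β₁ a β₁ᵀ + β₁ b > (1/2) β₁ Σ Σᵀ β₁ᵀ and (ii) β₁ a γ₁ᵀ = 0. -/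
open Matrix

/-! The boundary line `α₁ + β₁ x = 0` is parametrized by `x = -(α₁/|β₁|²) β₁ + t γ₁`, with `t ∈ ℝ`
and `γ₁ ⊥ β₁`. Along it the drift `β₁(a x + b)` is the affine function of `t` whose constant term
is `-(α₁/|β₁|²) β₁ a β₁ᵀ + β₁ b` and whose slope is `β₁ a γ₁ᵀ`. An affine function on `ℝ` stays above a
constant exactly when its slope vanishes and its constant term exceeds that constant. -/

/-- The Feller drift condition `β₁(a x + b) > (1/2) β₁ Σ Σᵀ β₁ᵀ` on the boundary line
`{x : α₁ + β₁ x = 0}` holds if and only if the two explicit parameter restrictions hold: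
`−(α₁/|β₁|²) β₁ a β₁ᵀ + β₁ b > (1/2) β₁ Σ Σᵀ β₁ᵀ` and `β₁ a γ₁ᵀ = 0`,
where `γ₁ = (−β₁₂, β₁₁)`. -/
theorem feller_drift_condition_iff_explicit
    (a : Matrix (Fin 2) (Fin 2) ℝ) (b : Fin 2 → ℝ) (Sm : Matrix (Fin 2) (Fin 2) ℝ)
    (α₁ : ℝ) (β₁ : Fin 2 → ℝ) (hβ : β₁ ≠ 0) :
    (∀ x : Fin 2 → ℝ, α₁ + β₁ ⬝ᵥ x = 0 →
        β₁ ⬝ᵥ (a *ᵥ x + b) > (1 / 2) * (β₁ ⬝ᵥ ((Sm * Smᵀ) *ᵥ β₁)))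
      ↔ (-(α₁ / (β₁ 0 ^ 2 + β₁ 1 ^ 2)) * (β₁ ⬝ᵥ (a *ᵥ β₁)) + β₁ ⬝ᵥ b
            > (1 / 2) * (β₁ ⬝ᵥ ((Sm * Smᵀ) *ᵥ β₁))
          ∧ β₁ ⬝ᵥ (a *ᵥ ![-(β₁ 1), β₁ 0]) = 0) := by
  have hN : 0 < β₁ 0 ^ 2 + β₁ 1 ^ 2 := by
    by_contra h
    apply hβ
    have h0 : β₁ 0 = 0 := by nlinarith [sq_nonneg (β₁ 0), sq_nonneg (β₁ 1)]
    have h1 : β₁ 1 = 0 := by nlinarith [sq_nonneg (β₁ 0), sq_nonneg (β₁ 1)]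
    ext i
    fin_cases i
    · exact h0
    · exact h1
  generalize (1 / 2) * (β₁ ⬝ᵥ ((Sm * Smᵀ) *ᵥ β₁)) = K
  set γ : Fin 2 → ℝ := ![-(β₁ 1), β₁ 0] with hγ
  set N := β₁ 0 ^ 2 + β₁ 1 ^ 2 with hNdef
  have hββ : β₁ ⬝ᵥ β₁ = N := by
    simp only [dotProduct, Fin.sum_univ_two, hNdef]; ring
  have hβγ : β₁ ⬝ᵥ γ = 0 := by
    simp [dotProduct, Fin.sum_univ_two, hγ]; ring
  have hdrift : ∀ t : ℝ, β₁ ⬝ᵥ (a *ᵥ (-(α₁ / N) • β₁ + t • γ) + b)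
      = -(α₁ / N) * (β₁ ⬝ᵥ (a *ᵥ β₁)) + β₁ ⬝ᵥ b + t * (β₁ ⬝ᵥ (a *ᵥ γ)) := by
    intro t
    simp only [mulVec_add, mulVec_smul, dotProduct_add, dotProduct_smul, smul_eq_mul]
    ring
  have hline : ∀ t : ℝ, α₁ + β₁ ⬝ᵥ (-(α₁ / N) • β₁ + t • γ) = 0 := by
    intro t
    simp only [dotProduct_add, dotProduct_smul, smul_eq_mul, hββ, hβγ]
    field_simp
    ring
  constructor
  · intro h
    have h' := fun t : ℝ => hdrift t ▸ h _ (hline t)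
    refine ⟨by simpa using h' 0, ?_⟩
    by_contra hQ
    -- At this `t` a nonzero slope would bring the drift down to exactly `K`.
    have := h' ((K - (-(α₁ / N) * (β₁ ⬝ᵥ (a *ᵥ β₁)) + β₁ ⬝ᵥ b)) / (β₁ ⬝ᵥ (a *ᵥ γ)))
    rw [div_mul_cancel₀ _ hQ] at this
    linarith
  · rintro ⟨h1, h2⟩ x hx
    have hxeq : x = -(α₁ / N) • β₁ + ((γ ⬝ᵥ x) / N) • γ := by
      have hα : α₁ = -(β₁ 0 * x 0 + β₁ 1 * x 1) := by
        simp only [dotProduct, Fin.sum_univ_two] at hx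
        linarith
      ext i
      fin_cases i <;>
        simp [dotProduct, Fin.sum_univ_two, hγ, hα] <;> field_simp <;> rw [hNdef] <;> ring
    rw [hxeq, hdrift, h2]
    simpa using h1
end

section
/- Let a ∈ ℝ^{2×2}, b ∈ ℝ², Σ ∈ ℝ^{2×2}, α₁ ∈ ℝ, c > 0, let β₁ ∈ ℝ² be a nonzero row vector, and set α₂ = α₁ + c, β₂ = β₁ (so v₂(x) = v₁(x) + c with v_i(x) = α_i + β_i x), and γ₁ = (−β₁₂, β₁₁). Write Σʲ for the j-th column of Σ. Then the multivariate Feller conditions — namely (1) for each ordered pair (i, j) with i ≠ j: β_i Σʲ = 0 or there exists c' ≥ 0 with α_i = α_j + c' and β_i = β_j; and (2) for each i: β_i(a x + b) > (1/2) β_i Σ Σᵀ β_iᵀ for all x ∈ ∂Dⁱ := {x : v_i(x) = 0, v_j(x) ≥ 0 for j ≠ i} — hold if and only if the three explicit conditions hold: (a) −(α₁/|β₁|²) β₁ a β₁ᵀ + β₁ b > (1/2) β₁ Σ Σᵀ β₁ᵀ, (b) β₁ a γ₁ᵀ = 0, and (c) β₁ Σ² = 0. -/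
/-!
Since `v₂ = v₁ + c` with `c > 0`, the boundary piece of `v₂` is empty, and of the two pairs in the
first Feller condition only `(1, 2)` is restrictive: it forces `β₁ Σ² = 0`. The boundary piece of
`v₁` is the line `x = -(α₁/|β₁|²) β₁ + t γ₁`, `t ∈ ℝ` (`dotProduct_boundary_line` and
`eq_boundary_line`). Along it the drift `β₁ (a x + b)` is affine in `t` with slope `β₁ a γ₁ᵀ`
(`drift_boundary_line`), so it is bounded below by a constant only if this slope vanishes, and then
the drift inequality reduces to its value at `t = 0`.
-/

open Matrix

theorem sq_add_sq_pos_of_ne_zero (β : Fin 2 → ℝ) (hβ : β ≠ 0) : 0 < β 0 ^ 2 + β 1 ^ 2 := by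
  by_contra h
  apply hβ
  have h0 : β 0 = 0 := by nlinarith [sq_nonneg (β 0), sq_nonneg (β 1)]
  have h1 : β 1 = 0 := by nlinarith [sq_nonneg (β 0), sq_nonneg (β 1)]
  ext k
  fin_cases k
  · exact h0
  · exact h1

theorem dotProduct_boundary_line (β : Fin 2 → ℝ) (hβ : β ≠ 0) (α t : ℝ) :
    α + β ⬝ᵥ (-(α / (β 0 ^ 2 + β 1 ^ 2)) • β + t • ![-(β 1), β 0]) = 0 := by
  have hn := (sq_add_sq_pos_of_ne_zero β hβ).ne'
  simp [dotProduct, Fin.sum_univ_two]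
  field_simp
  ring

theorem eq_boundary_line (β : Fin 2 → ℝ) (hβ : β ≠ 0) (α : ℝ) (x : Fin 2 → ℝ)
    (hx : α + β ⬝ᵥ x = 0) :
    ∃ t : ℝ, x = -(α / (β 0 ^ 2 + β 1 ^ 2)) • β + t • ![-(β 1), β 0] := by
  have hn := (sq_add_sq_pos_of_ne_zero β hβ).ne'
  simp only [dotProduct, Fin.sum_univ_two] at hx
  obtain rfl : α = -(β 0 * x 0 + β 1 * x 1) := by linarith
  -- The coefficient is the orthogonal projection of `x` onto `γ = (-β 1, β 0)`.
  refine ⟨(β 0 * x 1 - β 1 * x 0) / (β 0 ^ 2 + β 1 ^ 2), ?_⟩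
  ext k
  fin_cases k <;> simp <;> field_simp <;> ring

theorem drift_boundary_line (a : Matrix (Fin 2) (Fin 2) ℝ) (b β γ : Fin 2 → ℝ) (s t : ℝ) :
    β ⬝ᵥ (a *ᵥ (s • β + t • γ) + b)
      = s * (β ⬝ᵥ (a *ᵥ β)) + β ⬝ᵥ b + t * (β ⬝ᵥ (a *ᵥ γ)) := by
  simp only [mulVec_add, mulVec_smul, dotProduct_add, dotProduct_smul, smul_eq_mul]
  ring

/-- In the dependent-but-unproportional volatility case `v₂ = v₁ + c` (`c > 0`), i.e.
`α = (α₁, α₁ + c)` and both rows of `β` equal to `β₁ ≠ 0`, the multivariate Feller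
conditions — (1) for all `i ≠ j`, `β_i Σʲ = 0` or `v_i = v_j + c'` for some `c' ≥ 0`; and
(2) for each `i`, `β_i (a x + b) > (1/2) β_i Σ Σᵀ β_iᵀ` on
`∂Dⁱ = {x : v_i(x) = 0, v_j(x) ≥ 0, j ≠ i}` — hold if and only if the three explicit
conditions hold: `−(α₁/|β₁|²) β₁ a β₁ᵀ + β₁ b > (1/2) β₁ Σ Σᵀ β₁ᵀ`, `β₁ a γ₁ᵀ = 0`
(with `γ₁ = (−β₁₂, β₁₁)`), and `β₁ Σ² = 0`. -/
theorem feller_conditions_iff_explicit_dependent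
    (a : Matrix (Fin 2) (Fin 2) ℝ) (b : Fin 2 → ℝ) (Sm : Matrix (Fin 2) (Fin 2) ℝ)
    (α₁ : ℝ) (c : ℝ) (hc : 0 < c) (β₁ : Fin 2 → ℝ) (hβ : β₁ ≠ 0) :
    ((∀ i j : Fin 2, i ≠ j →
        ((![β₁, β₁] i) ⬝ᵥ (fun k => Sm k j) = 0 ∨
          ∃ c' : ℝ, 0 ≤ c' ∧ ![α₁, α₁ + c] i = ![α₁, α₁ + c] j + c'
            ∧ ![β₁, β₁] i = ![β₁, β₁] j))
      ∧ (∀ i : Fin 2, ∀ x : Fin 2 → ℝ,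
          (![α₁, α₁ + c] i + (![β₁, β₁] i) ⬝ᵥ x = 0 ∧
            ∀ j : Fin 2, j ≠ i → 0 ≤ ![α₁, α₁ + c] j + (![β₁, β₁] j) ⬝ᵥ x) →
          (![β₁, β₁] i) ⬝ᵥ (a *ᵥ x + b)
            > (1 / 2) * ((![β₁, β₁] i) ⬝ᵥ ((Sm * Smᵀ) *ᵥ (![β₁, β₁] i)))))
    ↔ (-(α₁ / (β₁ 0 ^ 2 + β₁ 1 ^ 2)) * (β₁ ⬝ᵥ (a *ᵥ β₁)) + β₁ ⬝ᵥ b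
          > (1 / 2) * (β₁ ⬝ᵥ ((Sm * Smᵀ) *ᵥ β₁))
        ∧ β₁ ⬝ᵥ (a *ᵥ ![-(β₁ 1), β₁ 0]) = 0
        ∧ β₁ ⬝ᵥ (fun k => Sm k 1) = 0) := by
  constructor
  · rintro ⟨h1, h2⟩
    have line : ∀ t : ℝ, -(α₁ / (β₁ 0 ^ 2 + β₁ 1 ^ 2)) * (β₁ ⬝ᵥ (a *ᵥ β₁)) + β₁ ⬝ᵥ b
        + t * (β₁ ⬝ᵥ (a *ᵥ ![-(β₁ 1), β₁ 0]))
          > (1 / 2) * (β₁ ⬝ᵥ ((Sm * Smᵀ) *ᵥ β₁)) := by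
      intro t
      have hx := dotProduct_boundary_line β₁ hβ α₁ t
      rw [← drift_boundary_line]
      refine h2 0 _ ⟨hx, fun j hj => ?_⟩
      obtain rfl : j = 1 := by omega
      change 0 ≤ α₁ + c + β₁ ⬝ᵥ _
      linarith
    refine ⟨by simpa using line 0, ?_, ?_⟩
    · by_contra hK
      -- With nonzero slope, the drift attains the bound itself at some point of the line.
      have h := line (((1 / 2) * (β₁ ⬝ᵥ ((Sm * Smᵀ) *ᵥ β₁))
        - (-(α₁ / (β₁ 0 ^ 2 + β₁ 1 ^ 2)) * (β₁ ⬝ᵥ (a *ᵥ β₁)) + β₁ ⬝ᵥ b))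
          / (β₁ ⬝ᵥ (a *ᵥ ![-(β₁ 1), β₁ 0])))
      rw [div_mul_cancel₀ _ hK] at h
      linarith
    · rcases h1 0 1 (by decide) with h | ⟨c', hc', h, -⟩
      · exact h
      · change α₁ = α₁ + c + c' at h
        linarith
  · rintro ⟨hA, hK, hS⟩
    refine ⟨fun i j hij => ?_, fun i x hx => ?_⟩
    · fin_cases i <;> fin_cases j
      · exact absurd rfl hij
      · exact Or.inl hS
      · exact Or.inr ⟨c, hc.le, rfl, rfl⟩
      · exact absurd rfl hij
    · obtain ⟨hx, hpos⟩ := hx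
      fin_cases i
      · change α₁ + β₁ ⬝ᵥ x = 0 at hx
        change β₁ ⬝ᵥ (a *ᵥ x + b) > (1 / 2) * (β₁ ⬝ᵥ ((Sm * Smᵀ) *ᵥ β₁))
        obtain ⟨t, rfl⟩ := eq_boundary_line β₁ hβ α₁ x hx
        rw [drift_boundary_line, hK, mul_zero, add_zero]
        exact hA
      -- On `v₂ = 0` one has `v₁ = -c < 0`, so this boundary piece is empty.
      · have h := hpos 0 (by decide)
        change α₁ + c + β₁ ⬝ᵥ x = 0 at hx
        change 0 ≤ α₁ + β₁ ⬝ᵥ x at h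
        linarith
end

section
/- Let a ∈ ℝ^{2×2}, b, α ∈ ℝ², Σ ∈ ℝ^{2×2}, and let β ∈ ℝ^{2×2} be invertible with rows β₁, β₂; set γ₁ = (−β₁₂, β₁₁) and γ₂ = (β₂₂, −β₂₁). Then the pair of conditions: (I) β₁( a β^{-1}((0, w)ᵀ − α) + b ) > (1/2) β₁ Σ Σᵀ β₁ᵀ for all w ≥ 0, and (II) β₂( a β^{-1}((v, 0)ᵀ − α) + b ) > (1/2) β₂ Σ Σᵀ β₂ᵀ for all v ≥ 0, holds if and only if the four conditions hold: (i) (β₁ a γ₁ᵀ)/det β ≥ 0, (ii) (β₂ a γ₂ᵀ)/det β ≥ 0, (iii) β₁ b − β₁ a β^{-1} α > (1/2) β₁ Σ Σᵀ β₁ᵀ, and (iv) β₂ b − β₂ a β^{-1} α > (1/2) β₂ Σ Σᵀ β₂ᵀ. -/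
open Matrix

/-!
Since `β⁻¹ = (det β)⁻¹ • adj β`, the columns of `β⁻¹` are `γ₂ᵀ / det β` and `γ₁ᵀ / det β`. Hence the
left side of each drift condition is an affine function of the boundary parameter, with slope
`βᵢ a γᵢᵀ / det β` and value `βᵢ b - βᵢ a β⁻¹ α` at zero (`drift_eq_affine`). An affine function
exceeds a constant on the whole half-line `[0, ∞)` exactly when its slope is nonnegative and its
value at zero exceeds the constant (`forall_nonneg_lt_affine_iff`).
-/

theorem forall_nonneg_lt_affine_iff (k c d : ℝ) :
    (∀ w : ℝ, 0 ≤ w → w * k + c > d) ↔ k ≥ 0 ∧ c > d := by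
  constructor
  · intro h
    have h0 : c > d := by simpa using h 0 le_rfl
    refine ⟨?_, h0⟩
    by_contra! hk
    -- With a negative slope, the affine function reaches the value `d` at `w = (c - d) / (-k)`.
    have h1 := h ((c - d) / (-k)) (div_nonneg (by linarith) (by linarith))
    have h2 : (c - d) / (-k) * k = -(c - d) := by
      field_simp [hk.ne]
    linarith
  · rintro ⟨hk, hc⟩ w hw
    have := mul_nonneg hw hk
    linarith

theorem inv_mulVec_snd_axis (β : Matrix (Fin 2) (Fin 2) ℝ) (w : ℝ) :
    β⁻¹ *ᵥ ![0, w] = (w / β.det) • ![-(β 0 1), β 0 0] := by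
  rw [Matrix.inv_def, Matrix.adjugate_fin_two, Ring.inverse_eq_inv']
  ext i
  fin_cases i <;> simp [Matrix.mulVec, dotProduct, Fin.sum_univ_two] <;> ring

theorem inv_mulVec_fst_axis (β : Matrix (Fin 2) (Fin 2) ℝ) (v : ℝ) :
    β⁻¹ *ᵥ ![v, 0] = (v / β.det) • ![β 1 1, -(β 1 0)] := by
  rw [Matrix.inv_def, Matrix.adjugate_fin_two, Ring.inverse_eq_inv']
  ext i
  fin_cases i <;> simp [Matrix.mulVec, dotProduct, Fin.sum_univ_two] <;> ring

/-- If `β⁻¹` sends the boundary point `p` to `(t / det β) • γ`, the drift in direction `r` at the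
state `β⁻¹ (p - α)` is affine in `t`. -/
theorem drift_eq_affine (a β : Matrix (Fin 2) (Fin 2) ℝ) (b α r p γ : Fin 2 → ℝ) (t : ℝ)
    (hp : β⁻¹ *ᵥ p = (t / β.det) • γ) :
    r ⬝ᵥ (a *ᵥ (β⁻¹ *ᵥ (p - α)) + b)
      = t * ((r ⬝ᵥ (a *ᵥ γ)) / β.det) + (r ⬝ᵥ b - r ⬝ᵥ (a *ᵥ (β⁻¹ *ᵥ α))) := by
  rw [Matrix.mulVec_sub, hp, Matrix.mulVec_sub, Matrix.mulVec_smul, dotProduct_add,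
    dotProduct_sub, dotProduct_smul, smul_eq_mul]
  ring

/-- Independent volatilities case (`det β ≠ 0`): the parametrized Feller drift conditions
(I) `β₁(a β⁻¹((0,w)ᵀ − α) + b) > (1/2) β₁ Σ Σᵀ β₁ᵀ` for all `w ≥ 0` and
(II) `β₂(a β⁻¹((v,0)ᵀ − α) + b) > (1/2) β₂ Σ Σᵀ β₂ᵀ` for all `v ≥ 0`
hold if and only if the four explicit conditions hold:
(i) `(β₁ a γ₁ᵀ)/det β ≥ 0`, (ii) `(β₂ a γ₂ᵀ)/det β ≥ 0`,
(iii) `β₁ b − β₁ a β⁻¹ α > (1/2) β₁ Σ Σᵀ β₁ᵀ`, (iv) `β₂ b − β₂ a β⁻¹ α > (1/2) β₂ Σ Σᵀ β₂ᵀ`,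
where `γ₁ = (−β₁₂, β₁₁)` and `γ₂ = (β₂₂, −β₂₁)`. -/
theorem feller_conditions_iff_explicit_independent
    (a : Matrix (Fin 2) (Fin 2) ℝ) (b α : Fin 2 → ℝ) (Sm β : Matrix (Fin 2) (Fin 2) ℝ)
    (hβ : IsUnit β.det) :
    ((∀ w : ℝ, 0 ≤ w →
        (fun j => β 0 j) ⬝ᵥ (a *ᵥ (β⁻¹ *ᵥ (![0, w] - α)) + b)
          > (1 / 2) * ((fun j => β 0 j) ⬝ᵥ ((Sm * Smᵀ) *ᵥ fun j => β 0 j)))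
      ∧ (∀ v : ℝ, 0 ≤ v →
        (fun j => β 1 j) ⬝ᵥ (a *ᵥ (β⁻¹ *ᵥ (![v, 0] - α)) + b)
          > (1 / 2) * ((fun j => β 1 j) ⬝ᵥ ((Sm * Smᵀ) *ᵥ fun j => β 1 j))))
    ↔ (((fun j => β 0 j) ⬝ᵥ (a *ᵥ ![-(β 0 1), β 0 0])) / β.det ≥ 0
        ∧ ((fun j => β 1 j) ⬝ᵥ (a *ᵥ ![β 1 1, -(β 1 0)])) / β.det ≥ 0
        ∧ (fun j => β 0 j) ⬝ᵥ b - (fun j => β 0 j) ⬝ᵥ (a *ᵥ (β⁻¹ *ᵥ α))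
            > (1 / 2) * ((fun j => β 0 j) ⬝ᵥ ((Sm * Smᵀ) *ᵥ fun j => β 0 j))
        ∧ (fun j => β 1 j) ⬝ᵥ b - (fun j => β 1 j) ⬝ᵥ (a *ᵥ (β⁻¹ *ᵥ α))
            > (1 / 2) * ((fun j => β 1 j) ⬝ᵥ ((Sm * Smᵀ) *ᵥ fun j => β 1 j))) := by
  simp only [fun w => drift_eq_affine a β b α (fun j => β 0 j) _ _ w (inv_mulVec_snd_axis β w),
    fun v => drift_eq_affine a β b α (fun j => β 1 j) _ _ v (inv_mulVec_fst_axis β v),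
    forall_nonneg_lt_affine_iff]
  tauto
end
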